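/- Let K be a field, v ∈ ℤ^n, let K ∈ K[x]^{n×n} be in v-weak Popov form, and let d = rdeg_v(K) ∈ ℤ^n. Let J denote the n×n reversal matrix (ones on the antidiagonal, zeros elsewhere) and dJ = (d_n,…,d_1) the reversed tuple. Let P be the (−dJ)-Popov form of J K^T J, that is, the unique basis of the row space of J K^T J in (−dJ)-Popov form. Then P^T is in 0-weak Popov form and det(K) = det(lm_v(K)) · det(P^T). -/

import Mathlib

open Polynomial Matrix

/-- The degree of a polynomial, viewed in `ℤ ∪ {-∞}`. -/
noncomputable def degZ {K : Type*} [Field K] (p : K[X]) : WithBot ℤ :=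
  p.degree.map fun a : ℕ => (a : ℤ)

/-- The `s`-row degree of a (row) vector of polynomials. -/
noncomputable def rdegRow {K : Type*} [Field K] {ν : Type*} [Fintype ν]
    (s : ν → ℤ) (v : ν → K[X]) : WithBot ℤ :=
  Finset.univ.sup fun j => degZ (v j) + (s j : WithBot ℤ)

/-- The `s`-row degree of a polynomial matrix. -/
noncomputable def rdeg {K : Type*} [Field K] {ι ν : Type*} [Fintype ν]
    (s : ν → ℤ) (P : Matrix ι ν K[X]) : ι → WithBot ℤ :=
  fun i => rdegRow s (P i)

/-- The `t`-column degree of a polynomial matrix. -/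
noncomputable def cdeg {K : Type*} [Field K] {ι ν : Type*} [Fintype ι]
    (t : ι → ℤ) (P : Matrix ι ν K[X]) : ν → WithBot ℤ :=
  fun j => Finset.univ.sup fun i => degZ (P i j) + (t i : WithBot ℤ)

/-- Coefficient of integer degree `d` of a polynomial (0 if `d < 0`). -/
noncomputable def coeffZ {K : Type*} [Field K] (p : K[X]) (d : ℤ) : K :=
  if 0 ≤ d then p.coeff d.toNat else 0

/-- The `s`-leading matrix of a polynomial matrix. -/
noncomputable def lm {K : Type*} [Field K] {ι ν : Type*} [Fintype ν]
    (s : ν → ℤ) (P : Matrix ι ν K[X]) : Matrix ι ν K :=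
  Matrix.of fun i j =>
    (rdeg s P i).recBotCoe 0 fun t => coeffZ (P i j) (t - s j)

/-- `P` is in `s`-reduced form: its `s`-leading matrix has full row rank,
i.e. its rows are linearly independent over `K`. -/
def IsReducedForm {K : Type*} [Field K] {ι ν : Type*} [Fintype ν]
    (s : ν → ℤ) (P : Matrix ι ν K[X]) : Prop :=
  LinearIndependent K fun i => lm s P i

open Classical in
/-- The `s`-pivot index of a row vector: the largest column index where the
`s`-row degree is attained (with a nonzero entry); `⊥` for the zero row. -/
noncomputable def piv {K : Type*} [Field K] {ν : Type*} [Fintype ν] [LinearOrder ν]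
    (s : ν → ℤ) (v : ν → K[X]) : WithBot ν :=
  (Finset.univ.filter fun j => v j ≠ 0 ∧ degZ (v j) + (s j : WithBot ℤ) = rdegRow s v).max

/-- The `s`-pivot degree of a row vector (junk value `0` for the zero row). -/
noncomputable def pivDeg {K : Type*} [Field K] {ν : Type*} [Fintype ν] [LinearOrder ν]
    (s : ν → ℤ) (v : ν → K[X]) : ℕ :=
  ((piv s v).map fun j => (v j).natDegree).unbotD 0

/-- `P` is in `s`-weak Popov form: no zero row and strictly increasing `s`-pivot indices. -/
def IsWeakPopov {K : Type*} [Field K] {ι ν : Type*} [Fintype ν] [LinearOrder ν] [Preorder ι]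
    (s : ν → ℤ) (P : Matrix ι ν K[X]) : Prop :=
  (∀ i, piv s (P i) ≠ ⊥) ∧ StrictMono fun i => piv s (P i)

/-- `P` is in `s`-unordered weak Popov form: no zero row and pairwise distinct
`s`-pivot indices. -/
def IsUWeakPopov {K : Type*} [Field K] {ι ν : Type*} [Fintype ν] [LinearOrder ν]
    (s : ν → ℤ) (P : Matrix ι ν K[X]) : Prop :=
  (∀ i, piv s (P i) ≠ ⊥) ∧ Function.Injective fun i => piv s (P i)

/-- `P` is in `s`-Popov form: `s`-weak Popov, monic pivots, and each pivot entry
has degree strictly larger than the other entries of its column. -/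
def IsPopov {K : Type*} [Field K] {ι ν : Type*} [Fintype ν] [LinearOrder ν] [Preorder ι]
    (s : ν → ℤ) (P : Matrix ι ν K[X]) : Prop :=
  IsWeakPopov s P ∧
    ∀ i (j : ν), piv s (P i) = (j : WithBot ν) →
      (P i j).Monic ∧ ∀ i', i' ≠ i → (P i' j).degree < (P i j).degree

/-- The row space of a polynomial matrix. -/
noncomputable def rowSpace {K : Type*} [Field K] {ι ν : Type*} (P : Matrix ι ν K[X]) :
    Submodule K[X] (ν → K[X]) :=
  Submodule.span K[X] (Set.range fun i => P i)

/-- The rows of `B` form a basis of the module `M`. -/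
def IsBasisOf {K : Type*} [Field K] {ι ν : Type*} (B : Matrix ι ν K[X])
    (M : Submodule K[X] (ν → K[X])) : Prop :=
  LinearIndependent K[X] (fun i => B i) ∧
    Submodule.span K[X] (Set.range fun i => B i) = M

/-- The left kernel of a polynomial matrix. -/
noncomputable def leftKernel {K : Type*} [Field K] {ι ν : Type*} [Fintype ι]
    (F : Matrix ι ν K[X]) : Submodule K[X] (ι → K[X]) :=
  LinearMap.ker F.vecMulLinear

/-!
In the Leibniz expansion of `det A` every term has degree at most the sum of the row degrees of
`A` minus the sum of the shifts, and the coefficients in that degree add up to the determinant of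
the leading matrix; when the latter is nonzero it is therefore the leading coefficient of `det A`.
For the transpose of a Popov basis this coefficient is `1`, and two square matrices with the same
row space have associated determinants. Hence the determinant of the Popov basis is the monic
associate of `det M`, and the missing factor is the leading coefficient `det (lm v M)` of `det M`.
-/

section WithBot

variable {G : Type*} [AddCommGroup G] [LinearOrder G] [IsOrderedAddMonoid G]
  {a : WithBot G} {b c : G}

theorem withBot_add_coe_le_coe_iff : a + (b : WithBot G) ≤ c ↔ a ≤ ((c - b : G) : WithBot G) := by
  induction a with
  | bot => simp
  | coe a => exact_mod_cast le_sub_iff_add_le.symm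

theorem withBot_add_coe_lt_coe_iff : a + (b : WithBot G) < c ↔ a < ((c - b : G) : WithBot G) := by
  induction a with
  | bot => simp [WithBot.bot_lt_coe]
  | coe a => exact_mod_cast lt_sub_iff_add_lt.symm

end WithBot

section Coeff

variable {K : Type*} [Field K] {p q : K[X]} {a b d e : ℤ}

theorem degZ_zero : degZ (0 : K[X]) = ⊥ := by
  simp [degZ]

theorem degZ_of_ne_zero (hp : p ≠ 0) : degZ p = ((p.natDegree : ℤ) : WithBot ℤ) := by
  rw [degZ, degree_eq_natDegree hp]
  rfl

theorem degZ_lt_degZ_iff : degZ p < degZ q ↔ p.degree < q.degree :=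
  (Nat.strictMono_cast (α := ℤ)).withBot_map.lt_iff_lt

theorem degZ_prod {ι : Type*} (s : Finset ι) (f : ι → K[X]) :
    degZ (∏ i ∈ s, f i) = ∑ i ∈ s, degZ (f i) := by
  change (Nat.castAddMonoidHom ℤ).withBotMap _ = ∑ i ∈ s, (Nat.castAddMonoidHom ℤ).withBotMap _
  rw [degree_prod, map_sum]

theorem degZ_prod_le {ι : Type*} {s : Finset ι} {f : ι → K[X]} {e : ι → ℤ}
    (h : ∀ i ∈ s, degZ (f i) ≤ e i) : degZ (∏ i ∈ s, f i) ≤ ((∑ i ∈ s, e i : ℤ) : WithBot ℤ) := by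
  rw [degZ_prod, WithBot.coe_sum]
  exact Finset.sum_le_sum h

theorem coeffZ_natCast (p : K[X]) (k : ℕ) : coeffZ p k = p.coeff k := by
  simp [coeffZ]

theorem coeffZ_sum {ι : Type*} (s : Finset ι) (f : ι → K[X]) (d : ℤ) :
    coeffZ (∑ i ∈ s, f i) d = ∑ i ∈ s, coeffZ (f i) d := by
  unfold coeffZ
  split_ifs
  · exact finsetSum_coeff s f d.toNat
  · exact Finset.sum_const_zero.symm

theorem coeffZ_smul {S : Type*} [SMulZeroClass S K] (c : S) (p : K[X]) (d : ℤ) :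
    coeffZ (c • p) d = c • coeffZ p d := by
  unfold coeffZ
  split_ifs <;> simp

theorem coeffZ_eq_zero_of_degZ_lt (h : degZ p < d) : coeffZ p d = 0 := by
  unfold coeffZ
  split_ifs with hd
  · lift d to ℕ using hd
    exact coeff_eq_zero_of_degree_lt <| (Nat.strictMono_cast (α := ℤ)).withBot_map.lt_iff_lt.mp h
  · rfl

theorem degZ_le_iff_coeffZ_eq_zero : degZ p ≤ e ↔ ∀ d, e < d → coeffZ p d = 0 := by
  refine ⟨fun h d hd => coeffZ_eq_zero_of_degZ_lt (h.trans_lt (WithBot.coe_lt_coe.mpr hd)),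
    fun h => ?_⟩
  by_contra! hlt
  have hp : p ≠ 0 := by
    rintro rfl
    simp [degZ_zero] at hlt
  rw [degZ_of_ne_zero hp, WithBot.coe_lt_coe] at hlt
  exact leadingCoeff_ne_zero.mpr hp ((coeffZ_natCast p _).symm.trans (h _ hlt))

theorem coeffZ_mul (hp : degZ p ≤ a) (hq : degZ q ≤ b) :
    coeffZ (p * q) (a + b) = coeffZ p a * coeffZ q b := by
  rcases eq_or_ne p 0 with rfl | hp0
  · simp [coeffZ]
  rcases eq_or_ne q 0 with rfl | hq0
  · simp [coeffZ]
  rw [degZ_of_ne_zero hp0, WithBot.coe_le_coe] at hp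
  rw [degZ_of_ne_zero hq0, WithBot.coe_le_coe] at hq
  lift a to ℕ using (Int.natCast_nonneg _).trans hp
  lift b to ℕ using (Int.natCast_nonneg _).trans hq
  rw [← Nat.cast_add, coeffZ_natCast, coeffZ_natCast, coeffZ_natCast]
  exact coeff_mul_add_eq_of_natDegree_le (by exact_mod_cast hp) (by exact_mod_cast hq)

theorem coeffZ_prod {ι : Type*} {s : Finset ι} {f : ι → K[X]} {e : ι → ℤ}
    (h : ∀ i ∈ s, degZ (f i) ≤ e i) :
    coeffZ (∏ i ∈ s, f i) (∑ i ∈ s, e i) = ∏ i ∈ s, coeffZ (f i) (e i) := by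
  classical
  induction s using Finset.induction_on with
  | empty => simp [coeffZ]
  | insert i s hi ih =>
    rw [Finset.forall_mem_insert] at h
    rw [Finset.prod_insert hi, Finset.prod_insert hi, Finset.sum_insert hi,
      coeffZ_mul h.1 (degZ_prod_le h.2), ih h.2]

theorem leadingCoeff_eq_coeffZ (hp : degZ p ≤ e) (he : coeffZ p e ≠ 0) :
    p.leadingCoeff = coeffZ p e := by
  have hp0 : p ≠ 0 := by
    rintro rfl
    simp [coeffZ] at he
  have hdeg : degZ p = e := hp.eq_of_not_lt fun h => he (coeffZ_eq_zero_of_degZ_lt h)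
  rw [degZ_of_ne_zero hp0, WithBot.coe_inj] at hdeg
  rw [← hdeg, coeffZ_natCast, leadingCoeff]

end Coeff

section Det

variable {K : Type*} [Field K] {ι : Type*} [Fintype ι] [DecidableEq ι]
  {A : Matrix ι ι K[X]} {a b : ι → ℤ}

theorem degZ_det_le (h : ∀ i j, degZ (A i j) ≤ ((a i - b j : ℤ) : WithBot ℤ)) :
    degZ A.det ≤ ((∑ i, a i - ∑ j, b j : ℤ) : WithBot ℤ) := by
  rw [degZ_le_iff_coeffZ_eq_zero]
  intro d hd
  rw [det_apply, coeffZ_sum]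
  refine Finset.sum_eq_zero fun σ _ => ?_
  have hσ : degZ (∏ j, A (σ j) j) < d := by
    refine (degZ_prod_le fun j _ => h (σ j) j).trans_lt (WithBot.coe_lt_coe.mpr ?_)
    rwa [Finset.sum_sub_distrib, Equiv.sum_comp σ a]
  rw [coeffZ_smul, coeffZ_eq_zero_of_degZ_lt hσ, smul_zero]

theorem coeffZ_det (h : ∀ i j, degZ (A i j) ≤ ((a i - b j : ℤ) : WithBot ℤ)) :
    coeffZ A.det (∑ i, a i - ∑ j, b j) =
      (Matrix.of fun i j => coeffZ (A i j) (a i - b j)).det := by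
  rw [det_apply, det_apply, coeffZ_sum]
  refine Finset.sum_congr rfl fun σ _ => ?_
  rw [coeffZ_smul, ← Equiv.sum_comp σ a, ← Finset.sum_sub_distrib,
    coeffZ_prod fun j _ => h (σ j) j]
  rfl

end Det

section LeadingMatrix

variable {K : Type*} [Field K] {ι ν : Type*} [Fintype ν] {s : ν → ℤ} {A : Matrix ι ν K[X]} {i : ι}
  {t : ℤ}

theorem degZ_add_shift_le_rdegRow (s : ν → ℤ) (r : ν → K[X]) (j : ν) :
    degZ (r j) + (s j : WithBot ℤ) ≤ rdegRow s r :=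
  Finset.le_sup (f := fun j => degZ (r j) + (s j : WithBot ℤ)) (Finset.mem_univ j)

theorem degZ_le_of_rdeg_eq (h : rdeg s A i = t) (j : ν) :
    degZ (A i j) ≤ ((t - s j : ℤ) : WithBot ℤ) := by
  rw [← withBot_add_coe_le_coe_iff, ← h]
  exact degZ_add_shift_le_rdegRow s (A i) j

theorem lm_apply_of_rdeg_eq (h : rdeg s A i = t) (j : ν) :
    lm s A i j = coeffZ (A i j) (t - s j) := by
  simp [lm, h]

theorem lm_apply_eq_zero_of_lt {j : ν} (h : degZ (A i j) + (s j : WithBot ℤ) < rdeg s A i) :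
    lm s A i j = 0 := by
  obtain ⟨t, ht⟩ := WithBot.ne_bot_iff_exists.mp (bot_le.trans_lt h).ne'
  rw [← ht, withBot_add_coe_lt_coe_iff] at h
  rw [lm_apply_of_rdeg_eq ht.symm, coeffZ_eq_zero_of_degZ_lt h]

theorem lm_apply_eq_leadingCoeff {j : ν} (h0 : A i j ≠ 0)
    (h : degZ (A i j) + (s j : WithBot ℤ) = rdeg s A i) :
    lm s A i j = (A i j).leadingCoeff := by
  rw [degZ_of_ne_zero h0, ← WithBot.coe_add] at h
  rw [lm_apply_of_rdeg_eq h.symm, add_sub_cancel_right, coeffZ_natCast, leadingCoeff]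

theorem IsReducedForm.rdeg_ne_bot (h : IsReducedForm s A) (i : ι) : rdeg s A i ≠ ⊥ := by
  intro hi
  refine h.ne_zero i (funext fun j => ?_)
  simp [lm, hi]

theorem isReducedForm_iff_det_ne_zero [DecidableEq ν] {A : Matrix ν ν K[X]} :
    IsReducedForm s A ↔ (lm s A).det ≠ 0 := by
  rw [← isUnit_iff_ne_zero, ← isUnit_iff_isUnit_det]
  exact linearIndependent_rows_iff_isUnit

theorem IsReducedForm.leadingCoeff_det [DecidableEq ν] {A : Matrix ν ν K[X]}
    (h : IsReducedForm s A) : A.det.leadingCoeff = (lm s A).det := by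
  choose d hd using fun i => WithBot.ne_bot_iff_exists.mp (h.rdeg_ne_bot i)
  have hle : ∀ i j, degZ (A i j) ≤ ((d i - s j : ℤ) : WithBot ℤ) :=
    fun i => degZ_le_of_rdeg_eq (hd i).symm
  have hlm : lm s A = Matrix.of fun i j => coeffZ (A i j) (d i - s j) :=
    Matrix.ext fun i => lm_apply_of_rdeg_eq (hd i).symm
  have hcoeff : coeffZ A.det (∑ i, d i - ∑ j, s j) = (lm s A).det := by
    rw [hlm, coeffZ_det hle]
  rw [leadingCoeff_eq_coeffZ (degZ_det_le hle) (hcoeff ▸ isReducedForm_iff_det_ne_zero.mp h),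
    hcoeff]

end LeadingMatrix

section Popov

variable {K : Type*} [Field K] {ι : Type*} [Fintype ι] [LinearOrder ι] {s : ι → ℤ}
  {A : Matrix ι ι K[X]}

theorem piv_eq_coe_iff {r : ι → K[X]} {j : ι} :
    piv s r = j ↔ r j ≠ 0 ∧ degZ (r j) + (s j : WithBot ℤ) = rdegRow s r ∧
      ∀ k, j < k → degZ (r k) + (s k : WithBot ℤ) < rdegRow s r := by
  classical
  constructor
  · intro h
    obtain ⟨-, h0, hj⟩ := Finset.mem_filter.mp (Finset.mem_of_max h)
    refine ⟨h0, hj, fun k hjk => (degZ_add_shift_le_rdegRow s r k).lt_of_ne fun hk => ?_⟩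
    have hk0 : r k ≠ 0 := by
      intro hk0
      rw [hk0, degZ_zero, WithBot.bot_add, ← hj, degZ_of_ne_zero h0] at hk
      exact WithBot.bot_ne_coe hk
    exact Finset.notMem_of_max_lt hjk h (Finset.mem_filter.mpr ⟨Finset.mem_univ k, hk0, hk⟩)
  · rintro ⟨h0, hj, hlt⟩
    refine le_antisymm (Finset.max_le fun k hk => ?_)
      (Finset.le_max (Finset.mem_filter.mpr ⟨Finset.mem_univ j, h0, hj⟩))
    exact WithBot.coe_le_coe.mpr (not_lt.mp fun hjk =>
      (hlt k hjk).ne (Finset.mem_filter.mp hk).2.2)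

theorem IsWeakPopov.piv_eq (h : IsWeakPopov s A) (i : ι) : piv s (A i) = i := by
  choose f hf using fun i => WithBot.ne_bot_iff_exists.mp (h.1 i)
  have hfmono : StrictMono f := fun i j hij => by
    simpa [← hf] using h.2 hij
  rw [← hf, hfmono.apply_eq]

theorem isWeakPopov_of_piv_eq (h : ∀ i, piv s (A i) = i) : IsWeakPopov s A :=
  ⟨fun i => by simp [h], fun i j hij => by simpa [h] using hij⟩

theorem IsWeakPopov.isLowerTriangular_lm (h : IsWeakPopov s A) :
    (lm s A).IsLowerTriangular := fun i j hij =>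
  lm_apply_eq_zero_of_lt ((piv_eq_coe_iff.mp (h.piv_eq i)).2.2 j hij)

theorem IsWeakPopov.diag_ne_zero (h : IsWeakPopov s A) (i : ι) : A i i ≠ 0 :=
  (piv_eq_coe_iff.mp (h.piv_eq i)).1

theorem IsWeakPopov.det_lm (h : IsWeakPopov s A) :
    (lm s A).det = ∏ i, (A i i).leadingCoeff := by
  rw [det_of_isLowerTriangular _ h.isLowerTriangular_lm]
  refine Finset.prod_congr rfl fun i _ => lm_apply_eq_leadingCoeff (h.diag_ne_zero i) ?_
  exact (piv_eq_coe_iff.mp (h.piv_eq i)).2.1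

theorem IsWeakPopov.isReducedForm (h : IsWeakPopov s A) : IsReducedForm s A := by
  rw [isReducedForm_iff_det_ne_zero, h.det_lm, Finset.prod_ne_zero_iff]
  exact fun i _ => leadingCoeff_ne_zero.mpr (h.diag_ne_zero i)

theorem piv_eq_of_forall_ne_lt {r : ι → K[X]} {j : ι} (h0 : r j ≠ 0)
    (h : ∀ k, k ≠ j → degZ (r k) + (s k : WithBot ℤ) < degZ (r j) + (s j : WithBot ℤ)) :
    piv s r = j := by
  have hrdeg : degZ (r j) + (s j : WithBot ℤ) = rdegRow s r := by
    refine le_antisymm (degZ_add_shift_le_rdegRow s r j) (Finset.sup_le fun k _ => ?_)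
    rcases eq_or_ne k j with rfl | hk
    · exact le_rfl
    · exact (h k hk).le
  exact piv_eq_coe_iff.mpr ⟨h0, hrdeg, fun k hk => hrdeg ▸ h k hk.ne'⟩

theorem IsPopov.monic_diag (h : IsPopov s A) (i : ι) : (A i i).Monic :=
  (h.2 i i (h.1.piv_eq i)).1

theorem IsPopov.isWeakPopov_transpose (h : IsPopov s A) : IsWeakPopov (fun _ => 0) Aᵀ := by
  refine isWeakPopov_of_piv_eq fun i =>
    piv_eq_of_forall_ne_lt (h.monic_diag i).ne_zero fun k hk => ?_
  simpa [degZ_lt_degZ_iff] using (h.2 i i (h.1.piv_eq i)).2 k hk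

theorem IsPopov.monic_det (h : IsPopov s A) : A.det.Monic := by
  have hT := h.isWeakPopov_transpose
  rw [← det_transpose, Monic, hT.isReducedForm.leadingCoeff_det, hT.det_lm]
  exact Finset.prod_eq_one fun i _ => h.monic_diag i

end Popov

section RowSpace

theorem det_dvd_det_of_span_row_le {R : Type*} [CommRing R] {ι : Type*} [Fintype ι]
    [DecidableEq ι] {A B : Matrix ι ι R}
    (h : Submodule.span R (Set.range A.row) ≤ Submodule.span R (Set.range B.row)) :
    B.det ∣ A.det := by
  have hmem : ∀ i, ∃ c, c ᵥ* B = A i := fun i => by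
    rw [← range_vecMulLinear B] at h
    exact h (Submodule.subset_span ⟨i, rfl⟩)
  choose U hU using hmem
  have hUB : Matrix.of U * B = A := Matrix.ext fun i j => congrFun (hU i) j
  exact ⟨(Matrix.of U).det, by rw [← hUB, det_mul, mul_comm]⟩

theorem associated_det_of_rowSpace_eq {K : Type*} [Field K] {ι : Type*} [Fintype ι]
    [DecidableEq ι] {A B : Matrix ι ι K[X]} (h : rowSpace A = rowSpace B) :
    Associated A.det B.det :=
  associated_of_dvd_dvd (det_dvd_det_of_span_row_le h.ge) (det_dvd_det_of_span_row_le h.le)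

end RowSpace

theorem eq_C_leadingCoeff_mul_of_associated_monic {R : Type*} [CommRing R] [IsDomain R]
    {p q : R[X]} (hp : p.Monic) (h : Associated p q) : q = C q.leadingCoeff * p :=
  eq_leadingCoeff_mul_of_monic_of_dvd_of_natDegree_le hp h.dvd
    (natDegree_le_natDegree (degree_eq_degree_of_associated h).ge)

theorem det_via_rev_popov_general {K : Type*} [Field K] {ι κ : Type*} [Fintype ι] [LinearOrder ι]
    [Fintype κ] [DecidableEq κ] (e : ι ≃ κ) {v : κ → ℤ} {M : Matrix κ κ K[X]}
    (hM : IsReducedForm v M) {t : ι → ℤ} {P : Matrix ι ι K[X]}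
    (hPM : rowSpace P = rowSpace (M.submatrix e e)ᵀ) (hP : IsPopov t P) :
    IsWeakPopov (fun _ => (0 : ℤ)) Pᵀ ∧ M.det = C (lm v M).det * Pᵀ.det := by
  have hassoc : Associated P.det M.det := by
    simpa using associated_det_of_rowSpace_eq hPM
  refine ⟨hP.isWeakPopov_transpose, ?_⟩
  rw [det_transpose, ← hM.leadingCoeff_det]
  exact eq_C_leadingCoeff_mul_of_associated_monic hP.monic_det hassoc

/-- Lemma 3.2 (d): if `M` is in `v`-weak Popov form with
`d = rdeg_v(M)`, and `P` is the `(−dJ)`-Popov form of `J Mᵀ J`, then `Pᵀ` is in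
`0`-weak Popov form and `det(M) = det(lm_v(M)) · det(Pᵀ)`. -/
theorem det_via_rev_popov {K : Type*} [Field K] {n : ℕ}
    (v : Fin n → ℤ) (M : Matrix (Fin n) (Fin n) K[X]) (hM : IsWeakPopov v M)
    (d : Fin n → ℤ) (hd : ∀ i, rdeg v M i = ((d i : ℤ) : WithBot ℤ))
    (P : Matrix (Fin n) (Fin n) K[X])
    (hPbasis : IsBasisOf P (rowSpace (Matrix.of fun i j => M (Fin.rev j) (Fin.rev i))))
    (hPpopov : IsPopov (fun i => -d (Fin.rev i)) P) :
    IsWeakPopov (fun _ => (0 : ℤ)) Pᵀ ∧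
      M.det = Polynomial.C (lm v M).det * Pᵀ.det :=
  det_via_rev_popov_general Fin.revPerm hM.isReducedForm hPbasis.2 hPpopov
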